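/- Under the interference-alignment hypotheses, set t = ⌈r²/l⌉ and define λ₀ = r if t = r, and λ₀ = t + 1 + ⌊log_{r/(r−1)}((r−t)·l/r)⌋ if 1 ≤ t < r. If λ₀ < k, then r^{⌈k/λ₀⌉} ≤ l²; consequently k ≤ 2λ₀ · log_r(l). -/

import Mathlib

/-!
Put `V = 𝔽^l` and let `U i` be the row space of `S i`. Two counting arguments use that
`(x u)_u ↦ ∑ u, x u * C u i` is an isomorphism `(U i)^r ≃ V`.

* Let `W` be a sum of `U i`, `i ≠ j`. It is stable under every `C u j`, so it contains `r`
  independent copies of `U j ⊓ W`, whence `r * dim (U j ⊓ W) ≤ dim W`. Thus the first `t` of the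
  `U i` are independent, and each further one shrinks the codimension of the sum by the factor
  `(r - 1) / r`; any `λ₀` of them span `V`.
* Let `G A` be the space of endomorphisms of `V` preserving `U i` for all `i ∈ A`. If `B` is
  disjoint from `A` and the `U b`, `b ∈ B`, span `V`, then `r * dim G (A ∪ B) ≤ dim G A`: filter
  both spaces by vanishing on more and more of the `U b`. In the piece recording the restriction to
  `U b`, the maps from `G (A ∪ B)` take values in `U b`, so composing them with the `C u b` gives
  `r` independent copies of that piece inside the one for `G A`. Starting from `dim G ∅ = l ^ 2`,
  each block of `λ₀` nodes gains a factor `r`, and a last incomplete block gains another because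
  the identity lies in every `G A`.
-/

open Module

section Numerics

theorem lt_pow_of_logb_lt_natCast {b x : ℝ} {n : ℕ} (hb : 1 < b) (hx : 0 < x)
    (h : Real.logb b x < n) : x < b ^ n := by
  rwa [Real.logb_lt_iff_lt_rpow hb hx, Real.rpow_natCast] at h

theorem mul_lt_of_lt_ceilDiv {a b m : ℕ} (hb : 0 < b) (h : m < a ⌈/⌉ b) : m * b < a := by
  rw [mul_comm, ← not_le]
  exact fun hab ↦ h.not_ge ((ceilDiv_le_iff_le_mul hb).2 hab)

theorem ceilDiv_pos {a b : ℕ} (ha : 0 < a) (hb : 0 < b) : 0 < a ⌈/⌉ b :=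
  Nat.pos_of_ne_zero fun h ↦ ha.not_ge <| by
    simpa using (ceilDiv_le_iff_le_mul hb).1 h.le

theorem natCast_le_two_mul_logb {k m r l : ℕ} (hm : 0 < m) (hr : 1 < r)
    (h : r ^ (k ⌈/⌉ m) ≤ l ^ 2) : (k : ℝ) ≤ 2 * m * Real.logb r l := by
  have hr' : (1 : ℝ) < r := mod_cast hr
  have hlog : (k ⌈/⌉ m : ℕ) ≤ 2 * Real.logb r l := by
    have := Real.logb_le_logb_of_le hr' (by positivity) (mod_cast h : (r : ℝ) ^ (k ⌈/⌉ m) ≤ l ^ 2)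
    simpa [Real.logb_pow, Real.logb_self_eq_one hr'] using this
  calc (k : ℝ) ≤ m * (k ⌈/⌉ m : ℕ) := mod_cast (ceilDiv_le_iff_le_mul hm).1 le_rfl
    _ ≤ m * (2 * Real.logb r l) := by gcongr
    _ = 2 * m * Real.logb r l := by ring

theorem exists_eq_add_and_pow_mul_lt_one {r l t m₀ : ℕ} (hr : 2 ≤ r) (hrl : r ≤ l) (htr : t ≤ r)
    (hm₀ : if t = r then m₀ = r
      else (m₀ : ℤ) = t + 1 + ⌊Real.logb ((r : ℝ) / ((r : ℝ) - 1)) (((r : ℝ) - t) * l / r)⌋) :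
    ∃ m, m₀ = t + m ∧ (((r : ℝ) - 1) / r) ^ m * (((r : ℝ) - t) * l / r) < 1 := by
  split_ifs at hm₀ with h
  · exact ⟨0, by omega, by simp [h]⟩
  set b : ℝ := (r : ℝ) / (r - 1) with hb_def
  set x : ℝ := ((r : ℝ) - t) * l / r with hx_def
  have hr' : (2 : ℝ) ≤ r := mod_cast hr
  have hb : 1 < b := by rw [hb_def, one_lt_div] <;> linarith
  have hx : 1 ≤ x := by
    have hrt : (t : ℝ) + 1 ≤ r := mod_cast (by omega : t + 1 ≤ r)
    have hrl' : (r : ℝ) ≤ l := mod_cast hrl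
    rw [hx_def, one_le_div (by linarith)]
    nlinarith
  obtain ⟨n, hn⟩ := Int.eq_ofNat_of_zero_le (Int.floor_nonneg.2 (Real.logb_nonneg hb hx))
  have hlog : Real.logb b x < (n + 1 : ℕ) := by
    simpa [hn] using Int.lt_floor_add_one (Real.logb b x)
  refine ⟨n + 1, by omega, ?_⟩
  rw [← inv_div, ← hb_def, inv_pow, inv_mul_lt_one₀ (by positivity)]
  exact lt_pow_of_logb_lt_natCast hb (by linarith) hlog

end Numerics

section InterferenceAlignment

variable {K V ι κ : Type*} [Field K] [AddCommGroup V] [Module K V] [Fintype κ]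

theorem finrank_map_add_finrank_inf_ker {M N : Type*} [AddCommGroup M] [Module K M]
    [FiniteDimensional K M] [AddCommGroup N] [Module K N] (f : M →ₗ[K] N) (p : Submodule K M) :
    finrank K (p.map f) + finrank K (p ⊓ LinearMap.ker f : Submodule K M) = finrank K p := by
  rw [← LinearMap.range_domRestrict, ← Submodule.map_comap_subtype,
    Submodule.finrank_map_subtype_eq, ← LinearMap.ker_domRestrict,
    LinearMap.finrank_range_add_finrank_ker]

theorem span_range_mul_eq_map_vecMulLinear {ρ m n : Type*} [Fintype m] (S : Matrix ρ m K)
    (C : Matrix m n K) : Submodule.span K (Set.range (S * C)) =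
      (Submodule.span K (Set.range S)).map C.vecMulLinear := by
  rw [Submodule.map_span]
  exact congrArg _ (Set.range_comp C.vecMulLinear S.row)

section IndependentCopies

variable {M N : Type*} [AddCommGroup M] [Module K M] [FiniteDimensional K M]
  [AddCommGroup N] [Module K N] [FiniteDimensional K N]

theorem card_mul_finrank_le_of_sum_eq_zero_imp (g : κ → M →ₗ[K] N)
    {D : Submodule K M} {E : Submodule K N} (hDE : ∀ u, D ≤ E.comap (g u))
    (hg : ∀ x : κ → M, (∀ u, x u ∈ D) → ∑ u, g u (x u) = 0 → x = 0) :
    Fintype.card κ * finrank K D ≤ finrank K E := by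
  classical
  let f : (κ → D) →ₗ[K] E := LinearMap.lsum K (fun _ ↦ D) K fun u ↦ (g u).restrict (hDE u)
  have hf : Function.Injective f := by
    rw [injective_iff_map_eq_zero]
    intro x hx
    have hsum : ∑ u, g u (x u) = 0 := by
      simpa [f, LinearMap.restrict_apply] using congrArg Subtype.val hx
    funext u
    exact Subtype.ext (congrFun (hg (fun u ↦ x u) (fun u ↦ (x u).2) hsum) u)
  simpa [finrank_pi_fintype] using LinearMap.finrank_le_finrank_of_injective hf

theorem bijective_sum_of_iSup_map_eq_top (g : κ → M →ₗ[K] N) {D : Submodule K M}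
    (hcard : Fintype.card κ * finrank K D ≤ finrank K N) (htop : ⨆ u, D.map (g u) = ⊤) :
    Function.Bijective fun x : κ → D ↦ ∑ u, g u (x u) := by
  classical
  let f : (κ → D) →ₗ[K] N := LinearMap.lsum K (fun _ ↦ D) K fun u ↦ (g u).domRestrict D
  have hsurj : Function.Surjective f := by
    rw [← LinearMap.range_eq_top, eq_top_iff, ← htop, iSup_le_iff]
    rintro u _ ⟨x, hx, rfl⟩
    exact ⟨Pi.single u ⟨x, hx⟩, by simp [f, Pi.single_apply, apply_ite]⟩
  have hfinrank : finrank K (κ → D) = finrank K N := by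
    refine le_antisymm ?_ (LinearMap.finrank_le_finrank_of_surjective hsurj)
    simpa [finrank_pi_fintype] using hcard
  have hf : Function.Bijective f :=
    ⟨(LinearMap.injective_iff_surjective_of_finrank_eq_finrank hfinrank).2 hsurj, hsurj⟩
  convert hf with x
  simp [f]

end IndependentCopies

/-- The interference-alignment conditions in coordinate-free form: `U i` is the repair subspace of
node `i` and `c u j` the encoding operator of node `j` at parity `u`. Each `U i` is stable under
the operators of the other nodes, and every vector of `V` is uniquely `∑ u, c u i (x u)` with all
`x u ∈ U i`: over matrices, `V` is the direct sum of the `r` row spaces of the `S_i C_{u,i}`. -/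
structure IsInterferenceAligned (U : ι → Submodule K V) (c : κ → ι → V →ₗ[K] V) : Prop where
  le_comap ⦃i j : ι⦄ (hij : j ≠ i) (u : κ) : U i ≤ (U i).comap (c u j)
  bijective_sum (i : ι) : Function.Bijective fun x : κ → U i ↦ ∑ u, c u i (x u)

/-- The endomorphisms of `V` that preserve `U i` for every `i ∈ A` and vanish on `W`. -/
def stabilizerVanishing (U : ι → Submodule K V) (A : Finset ι) (W : Submodule K V) :
    Submodule K (V →ₗ[K] V) :=
  (A.inf fun i ↦ (U i).compatibleMaps (U i)) ⊓ W.compatibleMaps ⊥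

section Stabilizer

variable {U : ι → Submodule K V} {A A' : Finset ι} {W : Submodule K V} {φ : V →ₗ[K] V}

theorem mem_stabilizerVanishing :
    φ ∈ stabilizerVanishing U A W ↔ (∀ i ∈ A, U i ≤ (U i).comap φ) ∧ W ≤ LinearMap.ker φ := by
  simp only [stabilizerVanishing, Submodule.mem_inf, Submodule.mem_finsetInf]
  rfl

theorem stabilizerVanishing_top : stabilizerVanishing U A ⊤ = ⊥ := by
  refine eq_bot_iff.2 fun φ hφ ↦ ?_
  exact LinearMap.ker_eq_top.1 (top_le_iff.1 (mem_stabilizerVanishing.1 hφ).2)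

theorem stabilizerVanishing_insert_of_le [DecidableEq ι] {b : ι} (hb : U b ≤ W) :
    stabilizerVanishing U (insert b A) W = stabilizerVanishing U A W := by
  ext φ
  simp only [mem_stabilizerVanishing, Finset.forall_mem_insert, and_assoc, and_iff_right_iff_imp]
  rintro ⟨-, hφ⟩ x hx
  simp [LinearMap.mem_ker.1 (hφ (hb hx))]

theorem finrank_stabilizerVanishing_eq_add [FiniteDimensional K V] (P : Submodule K V) :
    finrank K (stabilizerVanishing U A W) =
      finrank K ((stabilizerVanishing U A W).map (LinearMap.domRestrict' P)) +
        finrank K (stabilizerVanishing U A (P ⊔ W)) := by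
  have hker : stabilizerVanishing U A (P ⊔ W) =
      stabilizerVanishing U A W ⊓ LinearMap.ker (LinearMap.domRestrict' P) := by
    ext φ
    have hP : P ≤ LinearMap.ker φ ↔ LinearMap.domRestrict' P φ = 0 := by
      simp [SetLike.le_def, LinearMap.ext_iff]
    simp only [Submodule.mem_inf, mem_stabilizerVanishing, sup_le_iff, LinearMap.mem_ker, hP]
    tauto
  rw [hker, finrank_map_add_finrank_inf_ker]

end Stabilizer

namespace IsInterferenceAligned

variable {U : ι → Submodule K V} {c : κ → ι → V →ₗ[K] V} {A A' B : Finset ι} {W : Submodule K V}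
  {j : ι}

theorem of_matrix {ρ n : Type*} [Fintype ρ] [Fintype n] {S : ι → Matrix ρ n K}
    {C : κ → ι → Matrix n n K} (hcard : Fintype.card κ * Fintype.card ρ ≤ Fintype.card n)
    (hstable : ∀ i j, j ≠ i → ∀ u,
      Submodule.span K (Set.range (S i * C u j)) ≤ Submodule.span K (Set.range (S i)))
    (htop : ∀ i, ⨆ u, Submodule.span K (Set.range (S i * C u i)) = ⊤) :
    IsInterferenceAligned (fun i ↦ Submodule.span K (Set.range (S i)))
      fun u j ↦ (C u j).vecMulLinear := by
  simp only [span_range_mul_eq_map_vecMulLinear] at hstable htop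
  refine ⟨fun i j hij u ↦ Submodule.map_le_iff_le_comap.1 (hstable i j hij u), fun i ↦
    bijective_sum_of_iSup_map_eq_top (fun u ↦ (C u i).vecMulLinear) ?_ (htop i)⟩
  calc Fintype.card κ * finrank K (Submodule.span K (Set.range (S i)))
      ≤ Fintype.card κ * Fintype.card ρ := Nat.mul_le_mul_left _ (finrank_range_le_card (S i))
    _ ≤ finrank K (n → K) := by rwa [finrank_fintype_fun_eq_card]

theorem eq_zero_of_sum_eq_zero (h : IsInterferenceAligned U c) {x : κ → V} (hx : ∀ u, x u ∈ U j)
    (hsum : ∑ u, c u j (x u) = 0) : x = 0 := by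
  have hx0 : (fun u ↦ ⟨x u, hx u⟩ : κ → U j) = 0 := (h.bijective_sum j).1 (by simpa using hsum)
  funext u
  exact congrArg Subtype.val (congrFun hx0 u)

variable [FiniteDimensional K V]

theorem card_mul_finrank_eq (h : IsInterferenceAligned U c) (i : ι) :
    Fintype.card κ * finrank K (U i) = finrank K V := by
  classical
  let f : (κ → U i) →ₗ[K] V := LinearMap.lsum K (fun _ ↦ U i) K fun u ↦ (c u i).domRestrict (U i)
  have hf : Function.Bijective f := by
    convert h.bijective_sum i with x
    simp [f]
  simpa [finrank_pi_fintype] using (LinearEquiv.ofBijective f hf).finrank_eq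

section Spanning

theorem card_mul_finrank_inf_sup_le (h : IsInterferenceAligned U c) (hj : j ∉ A) :
    Fintype.card κ * finrank K (U j ⊓ A.sup U : Submodule K V) ≤
      finrank K (A.sup U : Submodule K V) := by
  have hstable (u : κ) : A.sup U ≤ (A.sup U).comap (c u j) :=
    Finset.sup_le fun i hi ↦ (h.le_comap (ne_of_mem_of_not_mem hi hj).symm u).trans
      (Submodule.comap_mono (Finset.le_sup hi))
  exact card_mul_finrank_le_of_sum_eq_zero_imp (fun u ↦ c u j)
    (fun u ↦ inf_le_right.trans (hstable u)) fun x hx ↦ h.eq_zero_of_sum_eq_zero fun u ↦ (hx u).1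

theorem card_mul_finrank_sup_insert_add [DecidableEq ι] (h : IsInterferenceAligned U c) (j : ι) :
    Fintype.card κ * finrank K ((insert j A).sup U : Submodule K V) +
        Fintype.card κ * finrank K (U j ⊓ A.sup U : Submodule K V) =
      finrank K V + Fintype.card κ * finrank K (A.sup U : Submodule K V) := by
  rw [Finset.sup_insert, ← mul_add, Submodule.finrank_sup_add_finrank_inf_eq, mul_add,
    h.card_mul_finrank_eq]

theorem card_mul_finrank_sup_eq (h : IsInterferenceAligned U c) (hV : 0 < finrank K V)
    (hA : A.card ≤ Fintype.card κ ^ 2 ⌈/⌉ finrank K V) :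
    Fintype.card κ * finrank K (A.sup U : Submodule K V) = A.card * finrank K V := by
  classical
  induction A using Finset.induction_on with
  | empty => simp
  | insert j A hj ih =>
    rw [Finset.card_insert_of_notMem hj] at hA ⊢
    specialize ih (by omega)
    have hsup_lt : finrank K (A.sup U : Submodule K V) < Fintype.card κ := by
      have := mul_lt_of_lt_ceilDiv hV (Nat.lt_of_succ_le hA)
      rw [← ih, sq] at this
      exact Nat.lt_of_mul_lt_mul_left this
    have hinf : finrank K (U j ⊓ A.sup U : Submodule K V) = 0 := by
      by_contra h0
      exact ((h.card_mul_finrank_inf_sup_le hj).trans_lt hsup_lt).not_ge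
        (Nat.le_mul_of_pos_right _ (Nat.pos_of_ne_zero h0))
    have hinsert := h.card_mul_finrank_sup_insert_add (A := A) j
    rw [hinf, mul_zero, add_zero, ih] at hinsert
    rw [hinsert, add_mul, one_mul, add_comm]

variable [Nonempty κ]

theorem finrank_sub_finrank_sup_insert_le [DecidableEq ι] (h : IsInterferenceAligned U c)
    (hj : j ∉ A) :
    (finrank K V : ℝ) - finrank K ((insert j A).sup U : Submodule K V) ≤
      ((Fintype.card κ : ℝ) - 1) / Fintype.card κ *
        (finrank K V - finrank K (A.sup U : Submodule K V)) := by
  have hr : (0 : ℝ) < Fintype.card κ := mod_cast Fintype.card_pos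
  have hinf : (Fintype.card κ : ℝ) * finrank K (U j ⊓ A.sup U : Submodule K V) ≤
      finrank K (A.sup U : Submodule K V) := mod_cast h.card_mul_finrank_inf_sup_le hj
  have hinsert : (Fintype.card κ : ℝ) * finrank K ((insert j A).sup U : Submodule K V) +
        Fintype.card κ * finrank K (U j ⊓ A.sup U : Submodule K V) =
      finrank K V + Fintype.card κ * finrank K (A.sup U : Submodule K V) :=
    mod_cast h.card_mul_finrank_sup_insert_add j
  rw [div_mul_eq_mul_div, le_div_iff₀ hr]
  linarith

theorem finrank_sub_finrank_sup_le (h : IsInterferenceAligned U c) (hV : 0 < finrank K V)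
    {t : ℕ} (ht : t ≤ Fintype.card κ ^ 2 ⌈/⌉ finrank K V) {m : ℕ} (hA : A.card = t + m) :
    (finrank K V : ℝ) - finrank K (A.sup U : Submodule K V) ≤
      (((Fintype.card κ : ℝ) - 1) / Fintype.card κ) ^ m *
        (((Fintype.card κ : ℝ) - t) * finrank K V / Fintype.card κ) := by
  classical
  have hr : (1 : ℝ) ≤ Fintype.card κ := mod_cast Fintype.card_pos (α := κ)
  induction m generalizing A with
  | zero =>
    have hsup : (Fintype.card κ : ℝ) * finrank K (A.sup U : Submodule K V) =
        A.card * finrank K V := mod_cast h.card_mul_finrank_sup_eq hV (by omega)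
    rw [hA, add_zero] at hsup
    rw [pow_zero, one_mul, le_div_iff₀ (by linarith)]
    linarith
  | succ m ih =>
    obtain ⟨j, A, hj, rfl, hcard⟩ := Finset.card_eq_succ.1 hA
    refine (h.finrank_sub_finrank_sup_insert_le hj).trans ?_
    rw [pow_succ', mul_assoc]
    exact mul_le_mul_of_nonneg_left (ih hcard) (div_nonneg (by linarith) (by linarith))

theorem sup_eq_top (h : IsInterferenceAligned U c) (hV : 0 < finrank K V)
    {t : ℕ} (ht : t ≤ Fintype.card κ ^ 2 ⌈/⌉ finrank K V) {m : ℕ} (hA : A.card = t + m)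
    (hm : (((Fintype.card κ : ℝ) - 1) / Fintype.card κ) ^ m *
      (((Fintype.card κ : ℝ) - t) * finrank K V / Fintype.card κ) < 1) :
    A.sup U = ⊤ := by
  have hlt := (h.finrank_sub_finrank_sup_le hV ht hA).trans_lt hm
  rw [sub_lt_iff_lt_add'] at hlt
  exact Submodule.eq_top_of_finrank_eq
    ((Submodule.finrank_le _).antisymm (Nat.lt_succ_iff.1 (mod_cast hlt)))

end Spanning

section Counting

theorem card_mul_finrank_map_stabilizerVanishing_le (h : IsInterferenceAligned U c)
    (hj : j ∉ A) (hjA' : j ∈ A') (hAA' : A ⊆ A') :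
    Fintype.card κ *
        finrank K ((stabilizerVanishing U A' W).map (LinearMap.domRestrict' (U j))) ≤
      finrank K ((stabilizerVanishing U A W).map (LinearMap.domRestrict' (U j))) := by
  refine card_mul_finrank_le_of_sum_eq_zero_imp
    (fun u ↦ LinearMap.compRight K (M := U j) (c u j)) ?_ fun ψ hψ hsum ↦ ?_
  · rintro u _ ⟨φ, hφ, rfl⟩
    obtain ⟨hφA', hφW⟩ := mem_stabilizerVanishing.1 hφ
    refine ⟨c u j ∘ₗ φ, mem_stabilizerVanishing.2 ⟨fun i hi x hx ↦ ?_, ?_⟩, rfl⟩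
    · exact h.le_comap (ne_of_mem_of_not_mem hi hj).symm u (hφA' i (hAA' hi) hx)
    · exact hφW.trans (LinearMap.ker_le_ker_comp _ _)
  · have hψU (x : U j) (u : κ) : ψ u x ∈ U j := by
      obtain ⟨φ, hφ, hφψ⟩ := hψ u
      rw [← hφψ]
      exact (mem_stabilizerVanishing.1 hφ).1 j hjA' x.2
    funext u
    ext x
    have hsum_x : ∑ u, c u j (ψ u x) = 0 := by simpa using LinearMap.congr_fun hsum x
    exact congrFun (h.eq_zero_of_sum_eq_zero (hψU x) hsum_x) u

theorem card_mul_finrank_stabilizerVanishing_union_le [DecidableEq ι]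
    (h : IsInterferenceAligned U c) (hAB : Disjoint A B) (htop : B.sup U ⊔ W = ⊤) :
    Fintype.card κ * finrank K (stabilizerVanishing U (A ∪ B) W) ≤
      finrank K (stabilizerVanishing U A W) := by
  induction B using Finset.induction_on generalizing W with
  | empty =>
    obtain rfl : W = ⊤ := by simpa using htop
    rw [Finset.union_empty, stabilizerVanishing_top, finrank_bot, mul_zero]
  | insert b B _ ih =>
    rw [Finset.disjoint_insert_right] at hAB
    rw [Finset.sup_insert, sup_comm (U b), sup_assoc] at htop
    have hmap := h.card_mul_finrank_map_stabilizerVanishing_le (A' := A ∪ insert b B) (W := W)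
      hAB.1 (by simp) Finset.subset_union_left
    have hker := ih hAB.2 htop
    rw [← stabilizerVanishing_insert_of_le (b := b) le_sup_left, ← Finset.union_insert] at hker
    rw [finrank_stabilizerVanishing_eq_add (A := A) (U b),
      finrank_stabilizerVanishing_eq_add (A := A ∪ insert b B) (U b), mul_add]
    exact add_le_add hmap hker

theorem card_le_finrank_stabilizerVanishing_bot (h : IsInterferenceAligned U c)
    (hj : j ∉ A) (hU : U j ≠ ⊥) :
    Fintype.card κ ≤ finrank K (stabilizerVanishing U A ⊥) := by
  classical
  set G := (stabilizerVanishing U (insert j A) ⊥).map (LinearMap.domRestrict' (U j))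
  have hid : LinearMap.domRestrict' (U j) LinearMap.id ∈ G :=
    Submodule.mem_map_of_mem (mem_stabilizerVanishing.2 ⟨fun i _ ↦ le_rfl, bot_le⟩)
  have hG_ne_bot : G ≠ ⊥ := by
    obtain ⟨x, hx, hx0⟩ := (Submodule.ne_bot_iff _).1 hU
    exact (Submodule.ne_bot_iff _).2
      ⟨_, hid, fun h0 ↦ hx0 (LinearMap.congr_fun h0 (⟨x, hx⟩ : U j))⟩
  calc Fintype.card κ ≤ Fintype.card κ * finrank K G :=
        Nat.le_mul_of_pos_right _ (Submodule.one_le_finrank_iff.2 hG_ne_bot)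
    _ ≤ finrank K ((stabilizerVanishing U A ⊥).map (LinearMap.domRestrict' (U j))) :=
        h.card_mul_finrank_map_stabilizerVanishing_le hj (by simp) (by simp)
    _ ≤ finrank K (stabilizerVanishing U A ⊥) := Submodule.finrank_map_le _ _

theorem card_pow_mul_finrank_stabilizerVanishing_bot_le (h : IsInterferenceAligned U c) {m n : ℕ}
    (hspan : ∀ B : Finset ι, B.card = m → B.sup U = ⊤) (hA : A.card = n * m) :
    Fintype.card κ ^ n * finrank K (stabilizerVanishing U A ⊥) ≤ finrank K V ^ 2 := by
  classical
  induction n generalizing A with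
  | zero =>
    have := Submodule.finrank_le (stabilizerVanishing U A ⊥)
    rw [finrank_linearMap] at this
    simpa [sq] using this
  | succ n ih =>
    rw [Nat.succ_mul] at hA
    obtain ⟨B, hBA, hB⟩ := Finset.exists_subset_card_eq (hA ▸ Nat.le_add_left m (n * m))
    have hunion := h.card_mul_finrank_stabilizerVanishing_union_le (W := ⊥)
      (Finset.sdiff_disjoint (s := B) (t := A)) (by simp [hspan B hB])
    rw [Finset.sdiff_union_of_subset hBA] at hunion
    calc Fintype.card κ ^ (n + 1) * finrank K (stabilizerVanishing U A ⊥)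
        = Fintype.card κ ^ n * (Fintype.card κ * finrank K (stabilizerVanishing U A ⊥)) := by ring
      _ ≤ Fintype.card κ ^ n * finrank K (stabilizerVanishing U (A \ B) ⊥) := by gcongr
      _ ≤ finrank K V ^ 2 := ih (by rw [Finset.card_sdiff_of_subset hBA]; omega)

theorem card_pow_ceilDiv_le_finrank_sq [Fintype ι] (h : IsInterferenceAligned U c)
    (hV : 0 < finrank K V) {m : ℕ} (hm : 0 < m)
    (hspan : ∀ B : Finset ι, B.card = m → B.sup U = ⊤) :
    Fintype.card κ ^ (Fintype.card ι ⌈/⌉ m) ≤ finrank K V ^ 2 := by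
  rcases hq : Fintype.card ι ⌈/⌉ m with _ | n
  · simpa using Nat.one_le_pow 2 _ hV
  have hn : n * m < (Finset.univ : Finset ι).card := mul_lt_of_lt_ceilDiv hm (hq ▸ n.lt_succ_self)
  obtain ⟨A, -, hA⟩ := Finset.exists_subset_card_eq hn.le
  obtain ⟨j, -, hj⟩ := Finset.exists_mem_notMem_of_card_lt_card (hA ▸ hn)
  have hU : U j ≠ ⊥ := by
    intro h0
    have := h.card_mul_finrank_eq j
    rw [h0, finrank_bot, mul_zero] at this
    omega
  calc Fintype.card κ ^ (n + 1)
      ≤ Fintype.card κ ^ n * finrank K (stabilizerVanishing U A ⊥) := by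
        rw [pow_succ]
        exact Nat.mul_le_mul_left _ (h.card_le_finrank_stabilizerVanishing_bot hj hU)
    _ ≤ finrank K V ^ 2 := h.card_pow_mul_finrank_stabilizerVanishing_bot_le hspan hA

end Counting

end IsInterferenceAligned

theorem stmt_15_general [Fintype ι] [FiniteDimensional K V] {U : ι → Submodule K V}
    {c : κ → ι → V →ₗ[K] V} (h : IsInterferenceAligned U c) {k r l t lam₀ : ℕ}
    (hι : Fintype.card ι = k) (hκ : Fintype.card κ = r) (hV : finrank K V = l)
    (hk : 0 < k) (hr : 2 ≤ r) (hl : 0 < l) (ht : t = r ^ 2 ⌈/⌉ l)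
    (hlam₀ : if t = r then lam₀ = r
      else (lam₀ : ℤ) = t + 1 +
        ⌊Real.logb ((r : ℝ) / ((r : ℝ) - 1)) (((r : ℝ) - t) * l / r)⌋) :
    r ^ (k ⌈/⌉ lam₀) ≤ l ^ 2 ∧ (k : ℝ) ≤ 2 * lam₀ * Real.logb r l := by
  subst hι hκ hV
  obtain ⟨i⟩ : Nonempty ι := Fintype.card_pos_iff.1 hk
  have : Nonempty κ := Fintype.card_pos_iff.1 (by omega)
  have hrl : Fintype.card κ ≤ finrank K V :=
    Nat.le_of_dvd hl (Dvd.intro _ (h.card_mul_finrank_eq i))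
  have htr : t ≤ Fintype.card κ := by
    rw [ht, ceilDiv_le_iff_le_mul hl, sq]
    exact Nat.mul_le_mul_right _ hrl
  obtain ⟨m, rfl, hm⟩ := exists_eq_add_and_pow_mul_lt_one hr hrl htr hlam₀
  have hpos : 0 < t + m := Nat.add_pos_left (ht ▸ ceilDiv_pos (by positivity) hl) m
  have hspan (B : Finset ι) (hB : B.card = t + m) : B.sup U = ⊤ := h.sup_eq_top hl ht.le hB hm
  have hpow := h.card_pow_ceilDiv_le_finrank_sq hl hpos hspan
  exact ⟨hpow, natCast_le_two_mul_logb hpos hr hpow⟩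

end InterferenceAlignment

theorem stmt_15 {𝔽 : Type*} [Field 𝔽] (k r l : ℕ)
    (hk : 0 < k) (hr : 2 ≤ r) (hl : 0 < l) (hrl : r ∣ l)
    (S : Fin k → Matrix (Fin (l / r)) (Fin l) 𝔽)
    (C : Fin r → Fin k → Matrix (Fin l) (Fin l) 𝔽)
    (hCinv : ∀ u j, IsUnit (C u j))
    (hC1 : ∀ j, C ⟨0, by omega⟩ j = 1)
    (hIA1 : ∀ (i j : Fin k), j ≠ i → ∀ u : Fin r,
      Submodule.span 𝔽 (Set.range (S i * C u j)) = Submodule.span 𝔽 (Set.range (S i)))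
    (hIA2 : ∀ i : Fin k, iSupIndep
      fun u : Fin r => Submodule.span 𝔽 (Set.range (S i * C u i)))
    (hIA3 : ∀ i : Fin k,
      (⨆ u : Fin r, Submodule.span 𝔽 (Set.range (S i * C u i))) = ⊤)
    (t : ℕ) (ht : t = r ^ 2 ⌈/⌉ l)
    (lam₀ : ℕ)
    (hlam₀ : if t = r then lam₀ = r
      else (lam₀ : ℤ) = t + 1 +
        ⌊Real.logb ((r : ℝ) / ((r : ℝ) - 1)) (((r : ℝ) - t) * l / r)⌋)
    (hlam₀k : lam₀ < k) :
    r ^ (k ⌈/⌉ lam₀) ≤ l ^ 2 ∧ (k : ℝ) ≤ 2 * lam₀ * Real.logb r l := by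
  have hS := IsInterferenceAligned.of_matrix (S := S) (C := C) (by simpa using Nat.mul_div_le l r)
    (fun i j hij u ↦ (hIA1 i j hij u).le) hIA3
  exact stmt_15_general hS (Fintype.card_fin k) (Fintype.card_fin r) (finrank_fin_fun 𝔽)
    hk hr hl ht hlam₀
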